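/- arXiv:1512.04969 — 2 statements merged into one kernel-verified Lean document; each statement's English description precedes it below -/
import Mathlib

section
/- Let F be an algebraically closed field and let (a_n)_{n≥2} be any sequence of non-negative integers. Then there exists a finitely generated (affine) unital associative F-algebra B such that for every integer n ≥ 2, the number of isomorphism classes of simple left B-modules of F-dimension exactly n equals a_n; that is, there exist a_n pairwise non-isomorphic simple B-modules of F-dimension n, and every simple B-module of F-dimension n is isomorphic to one of them. -/
universe u

/-- A bundled simple left `B`-module whose underlying `F`-vector space (with scalar action
induced from `F → B`, expressed by the `IsScalarTower` field) has dimension `n`. -/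
structure SimpleModOfDim (F B : Type*) [Field F] [Ring B] [Algebra F B] (n : ℕ) where
  carrier : Type
  [isAddCommGroup : AddCommGroup carrier]
  [isModuleF : Module F carrier]
  [isModuleB : Module B carrier]
  [isTower : IsScalarTower F B carrier]
  isSimple : IsSimpleModule B carrier
  dim_eq : Module.finrank F carrier = n

attribute [instance] SimpleModOfDim.isAddCommGroup SimpleModOfDim.isModuleF
  SimpleModOfDim.isModuleB SimpleModOfDim.isTower

/-- A finitely generated (affine) unital associative `F`-algebra `B` such that, for every
`n ≥ 2`, there are exactly `a n` isomorphism classes of simple left `B`-modules of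
`F`-dimension `n`: there is a family of `a n` pairwise non-isomorphic simple modules of
`F`-dimension `n`, and every simple `B`-module of `F`-dimension `n` is isomorphic to a
member of the family. -/
structure AffineAlgWithPrescribedSimples (F : Type) [Field F] (a : ℕ → ℕ) where
  B : Type
  [ringB : Ring B]
  [algB : Algebra F B]
  finType : Algebra.FiniteType F B
  counting : ∀ n : ℕ, 2 ≤ n →
    ∃ M : Fin (a n) → SimpleModOfDim F B n,
      (∀ i j : Fin (a n), i ≠ j → IsEmpty ((M i).carrier ≃ₗ[B] (M j).carrier)) ∧
      (∀ (N : Type u) [AddCommGroup N] [Module F N] [Module B N] [IsScalarTower F B N],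
        IsSimpleModule B N → Module.finrank F N = n →
        ∃ i : Fin (a n), Nonempty (N ≃ₗ[B] (M i).carrier))

open Polynomial

section Relations

variable {F B : Type*} [Field F] [Ring B] [Algebra F B]

/-- For the `n × n` Jordan block `u` and its transpose `v`, the element `corner u v m` is the
matrix unit in the bottom left corner if `n = m + 1`, and zero otherwise. -/
def corner (u v : B) (m : ℕ) : B := (1 - v * u) * u ^ m * (1 - u * v)

/-- Relations satisfied by a nilpotent Jordan block and its transpose. -/
structure JordanRelations (u v : B) : Prop where
  mul_mul_left : u * v * u = u
  mul_mul_right : v * u * v = v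
  pow_mul_corner : ∀ m, v ^ (m + 1) * corner u v m = 0
  mul_pow_mul_corner : ∀ m j, j < m → (1 - u * v) * v ^ j * corner u v m = 0

theorem map_corner {C : Type*} [Ring C] (φ : B →+* C) (u v : B) (m : ℕ) :
    φ (corner u v m) = corner (φ u) (φ v) m := by
  simp [corner]

theorem map_pow_mul_one_sub_mul_pow {C : Type*} [Ring C] (φ : B →+* C) (u v : B) (j k : ℕ) :
    φ (u ^ j * (1 - u * v) * v ^ k) = φ u ^ j * (1 - φ u * φ v) * φ v ^ k := by
  simp

theorem JordanRelations.of_jointly_injective {ι : Type*} {C : ι → Type*} [∀ p, Ring (C p)]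
    (φ : ∀ p, B →+* C p) (hφ : ∀ x y, (∀ p, φ p x = φ p y) → x = y) {u v : B}
    (h : ∀ p, JordanRelations (φ p u) (φ p v)) : JordanRelations u v where
  mul_mul_left := hφ _ _ fun p => by simpa using (h p).mul_mul_left
  mul_mul_right := hφ _ _ fun p => by simpa using (h p).mul_mul_right
  pow_mul_corner m := hφ _ _ fun p => by simpa [map_corner] using (h p).pow_mul_corner m
  mul_pow_mul_corner m j hj := hφ _ _ fun p => by
    simpa [map_corner] using (h p).mul_pow_mul_corner m j hj

end Relations

section JordanBlock

variable (F : Type*) [Field F] (n : ℕ)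

/-- The nilpotent Jordan block sending the `i`-th standard basis vector to the `(i+1)`-st. -/
def shiftUp : Module.End F (Fin n → F) where
  toFun y i := if 0 < i.1 then y ⟨i.1 - 1, by omega⟩ else 0
  map_add' x y := by ext i; simp only [Pi.add_apply]; split_ifs <;> simp
  map_smul' c y := by ext i; simp

/-- The transpose of `shiftUp`. -/
def shiftDown : Module.End F (Fin n → F) where
  toFun y i := if h : i.1 + 1 < n then y ⟨i.1 + 1, h⟩ else 0
  map_add' x y := by ext i; simp only [Pi.add_apply]; split_ifs <;> simp
  map_smul' c y := by ext i; simp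

variable {F n}

theorem shiftUp_apply (y : Fin n → F) (i : Fin n) :
    shiftUp F n y i = if 0 < i.1 then y ⟨i.1 - 1, by omega⟩ else 0 := rfl

theorem shiftDown_apply (y : Fin n → F) (i : Fin n) :
    shiftDown F n y i = if h : i.1 + 1 < n then y ⟨i.1 + 1, h⟩ else 0 := rfl

theorem shiftUp_pow_apply (j : ℕ) (y : Fin n → F) (i : Fin n) :
    (shiftUp F n ^ j) y i = if j ≤ i.1 then y ⟨i.1 - j, by omega⟩ else 0 := by
  induction j generalizing i with
  | zero => simp
  | succ j ih =>
    rw [pow_succ', Module.End.mul_apply, shiftUp_apply]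
    split_ifs with h₁ h₂ h₂
    · rw [ih, if_pos (by simp only; omega)]
      congr 2
      simp only
      omega
    · rw [ih, if_neg (by simp only; omega)]
    · omega
    · rfl

theorem shiftDown_pow_apply (j : ℕ) (y : Fin n → F) (i : Fin n) :
    (shiftDown F n ^ j) y i = if h : i.1 + j < n then y ⟨i.1 + j, h⟩ else 0 := by
  induction j generalizing i with
  | zero => simp
  | succ j ih =>
    rw [pow_succ', Module.End.mul_apply, shiftDown_apply]
    split_ifs with h₁ h₂ h₂
    · rw [ih, dif_pos (by simp only; omega)]
      congr 2
      simp only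
      omega
    · rw [ih, dif_neg (by simp only; omega)]
    · omega
    · rfl

theorem one_sub_shiftUp_mul_shiftDown_apply (y : Fin n → F) (i : Fin n) :
    (1 - shiftUp F n * shiftDown F n) y i = if i.1 = 0 then y i else 0 := by
  have hi := i.2
  simp only [LinearMap.sub_apply, Module.End.one_apply, Module.End.mul_apply, Pi.sub_apply,
    shiftUp_apply, shiftDown_apply]
  rcases Nat.eq_zero_or_pos i.1 with h | h
  · simp [h]
  · simp [h, h.ne', Nat.sub_add_cancel h]

theorem one_sub_shiftDown_mul_shiftUp_apply (y : Fin n → F) (i : Fin n) :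
    (1 - shiftDown F n * shiftUp F n) y i = if i.1 + 1 = n then y i else 0 := by
  have hi := i.2
  simp only [LinearMap.sub_apply, Module.End.one_apply, Module.End.mul_apply, Pi.sub_apply,
    shiftUp_apply, shiftDown_apply]
  rcases eq_or_ne (i.1 + 1) n with h | h
  · simp [h]
  · simp [h, show i.1 + 1 < n by omega]

theorem corner_shift_apply (m : ℕ) (y : Fin n → F) (i : Fin n) :
    corner (shiftUp F n) (shiftDown F n) m y i =
      if i.1 = m ∧ m + 1 = n then y ⟨0, i.pos⟩ else 0 := by
  have hi := i.2
  rw [corner, Module.End.mul_apply, Module.End.mul_apply, one_sub_shiftDown_mul_shiftUp_apply,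
    shiftUp_pow_apply, one_sub_shiftUp_mul_shiftDown_apply]
  split_ifs <;> first | rfl | (exfalso; omega) | (exfalso; simp only at *; omega) | congr 2

theorem corner_shift_eq_zero {m : ℕ} (h : n ≠ m + 1) :
    corner (shiftUp F n) (shiftDown F n) m = 0 := by
  refine LinearMap.ext fun y => funext fun i => ?_
  rw [corner_shift_apply, if_neg (by omega)]
  rfl

theorem jordanRelations_shift : JordanRelations (shiftUp F n) (shiftDown F n) where
  mul_mul_left := by
    refine LinearMap.ext fun y => funext fun i => ?_
    have := one_sub_shiftUp_mul_shiftDown_apply (shiftUp F n y) i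
    simp only [LinearMap.sub_apply, Module.End.one_apply, Pi.sub_apply] at this
    rw [Module.End.mul_apply, eq_comm, ← sub_eq_zero, this, shiftUp_apply]
    split_ifs <;> first | rfl | omega
  mul_mul_right := by
    refine LinearMap.ext fun y => funext fun i => ?_
    have := one_sub_shiftDown_mul_shiftUp_apply (shiftDown F n y) i
    simp only [LinearMap.sub_apply, Module.End.one_apply, Pi.sub_apply] at this
    rw [Module.End.mul_apply, eq_comm, ← sub_eq_zero, this, shiftDown_apply]
    split_ifs <;> first | rfl | omega
  pow_mul_corner m := by
    refine LinearMap.ext fun y => funext fun i => ?_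
    rw [Module.End.mul_apply, shiftDown_pow_apply]
    split_ifs
    · rw [corner_shift_apply, if_neg (by simp only; omega)]
      rfl
    · rfl
  mul_pow_mul_corner m j hj := by
    refine LinearMap.ext fun y => funext fun i => ?_
    rw [Module.End.mul_apply, Module.End.mul_apply, one_sub_shiftUp_mul_shiftDown_apply,
      shiftDown_pow_apply]
    split_ifs
    · rw [corner_shift_apply, if_neg (by simp only; omega)]
      rfl
    · rfl
    · rfl

theorem shiftUp_single (i : Fin n) :
    shiftUp F n (Pi.single i 1) =
      if h : i.1 + 1 < n then Pi.single ⟨i.1 + 1, h⟩ 1 else 0 := by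
  ext k
  have hk := k.2
  rw [shiftUp_apply]
  split_ifs with h₁ h₂ h₂
  · simp only [Pi.single_apply, Fin.ext_iff]
    congr 1
    simp only [eq_iff_iff]
    omega
  · rw [Pi.single_apply, if_neg (by rw [Fin.ext_iff]; simp only; omega)]
    rfl
  · rw [Pi.single_apply, if_neg (by rw [Fin.ext_iff]; simp only; omega)]
  · rfl

theorem shiftDown_single (i : Fin n) :
    shiftDown F n (Pi.single i 1) =
      if 0 < i.1 then Pi.single ⟨i.1 - 1, by omega⟩ 1 else 0 := by
  ext k
  have hi := i.2
  rw [shiftDown_apply]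
  split_ifs with h₁ h₂ h₂
  · simp only [Pi.single_apply, Fin.ext_iff]
    congr 1
    simp only [eq_iff_iff]
    omega
  · rw [Pi.single_apply, if_neg (by rw [Fin.ext_iff]; simp only; omega)]
    rfl
  · rw [Pi.single_apply, if_neg (by rw [Fin.ext_iff]; simp only; omega)]
  · rfl

/-- The matrix units generated by the shifts. -/
theorem shiftUp_pow_mul_shiftDown_pow_apply (j k : Fin n) (y : Fin n → F) :
    (shiftUp F n ^ j.1 * (1 - shiftUp F n * shiftDown F n) * shiftDown F n ^ k.1) y =
      y k • Pi.single j 1 := by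
  ext i
  have hi := i.2
  have hk := k.2
  rw [Module.End.mul_apply, Module.End.mul_apply, shiftUp_pow_apply,
    one_sub_shiftUp_mul_shiftDown_apply, shiftDown_pow_apply, Pi.smul_apply, Pi.single_apply]
  rcases eq_or_ne i j with rfl | hij
  · simp
  · rw [if_neg hij]
    rw [ne_eq, Fin.ext_iff] at hij
    split_ifs <;> first | (exfalso; simp only at *; omega) | simp

end JordanBlock

section Generated

variable {F B : Type*} [Field F] [Ring B] [Algebra F B] {u v z : B}
  {N : Type*} [AddCommGroup N] [Module F N] [Module B N] [IsScalarTower F B N]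

theorem smul_mem_of_adjoin_eq_top (hgen : Algebra.adjoin F {u, v, z} = ⊤)
    (K : Submodule F N) (hu : ∀ w ∈ K, u • w ∈ K)
    (hv : ∀ w ∈ K, v • w ∈ K) (hz : ∀ w ∈ K, z • w ∈ K) (b : B) : ∀ w ∈ K, b • w ∈ K := by
  have hb : b ∈ Algebra.adjoin F {u, v, z} := hgen ▸ Algebra.mem_top
  induction hb using Algebra.adjoin_induction with
  | mem x hx => rcases hx with rfl | rfl | rfl <;> assumption
  | algebraMap r => intro w hw; rw [algebraMap_smul]; exact K.smul_mem r hw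
  | add x y _ _ hx hy => intro w hw; rw [add_smul]; exact K.add_mem (hx w hw) (hy w hw)
  | mul x y _ _ hx hy => intro w hw; rw [mul_smul]; exact hx _ (hy w hw)

theorem eq_top_of_stable (hgen : Algebra.adjoin F {u, v, z} = ⊤)
    [IsSimpleModule B N] (K : Submodule F N) (hu : ∀ w ∈ K, u • w ∈ K)
    (hv : ∀ w ∈ K, v • w ∈ K) (hz : ∀ w ∈ K, z • w ∈ K) (hK : K ≠ ⊥) : K = ⊤ := by
  let K' : Submodule B N :=
    { K with smul_mem' := fun b w hw => smul_mem_of_adjoin_eq_top hgen K hu hv hz b w hw }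
  rcases eq_bot_or_eq_top K' with h | h
  · exact absurd ((Submodule.eq_bot_iff K).2 fun x hx => (Submodule.eq_bot_iff K').1 h x hx) hK
  · exact (Submodule.eq_top_iff').2 fun x => (Submodule.eq_top_iff' (p := K')).1 h x

theorem map_smul_of_adjoin_eq_top (hgen : Algebra.adjoin F {u, v, z} = ⊤)
    {M : Type*} [AddCommGroup M] [Module F M] [Module B M]
    [IsScalarTower F B M] (φ : M →ₗ[F] N) (hu : ∀ w, φ (u • w) = u • φ w)
    (hv : ∀ w, φ (v • w) = v • φ w) (hz : ∀ w, φ (z • w) = z • φ w) (b : B) :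
    ∀ w, φ (b • w) = b • φ w := by
  have hb : b ∈ Algebra.adjoin F {u, v, z} := hgen ▸ Algebra.mem_top
  induction hb using Algebra.adjoin_induction with
  | mem x hx => rcases hx with rfl | rfl | rfl <;> assumption
  | algebraMap r => intro w; rw [algebraMap_smul, algebraMap_smul, map_smul]
  | add x y _ _ hx hy => intro w; rw [add_smul, add_smul, map_add, hx, hy]
  | mul x y _ _ hx hy => intro w; rw [mul_smul, mul_smul, hx, hy]

theorem nonempty_equiv_of_hom (hgen : Algebra.adjoin F {u, v, z} = ⊤)
    {M : Type*} [AddCommGroup M] [Module F M] [Module B M]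
    [IsScalarTower F B M] [IsSimpleModule B M] [IsSimpleModule B N] (φ : M →ₗ[F] N)
    (hφ : φ ≠ 0) (hu : ∀ w, φ (u • w) = u • φ w) (hv : ∀ w, φ (v • w) = v • φ w)
    (hz : ∀ w, φ (z • w) = z • φ w) : Nonempty (M ≃ₗ[B] N) := by
  let ψ : M →ₗ[B] N := { φ with map_smul' := map_smul_of_adjoin_eq_top hgen φ hu hv hz }
  have hψ : ψ ≠ 0 := fun h => hφ (LinearMap.ext fun w => LinearMap.congr_fun h w)
  exact ⟨LinearEquiv.ofBijective ψ (LinearMap.bijective_of_ne_zero hψ)⟩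

/-- A vector on which some `corner` does not vanish generates a Jordan block. -/
theorem exists_hom_of_corner_ne_zero (hrel : JordanRelations u v) {m : ℕ} {x : N}
    (hx : corner u v m • x ≠ 0) :
    ∃ φ : (Fin (m + 1) → F) →ₗ[F] N, φ ≠ 0 ∧
      (∀ w, φ (shiftUp F (m + 1) w) = u • φ w) ∧
      ∀ w, φ (shiftDown F (m + 1) w) = v • φ w := by
  set y := corner u v m • x with hy
  have huy : u • y = 0 := by
    have : u * corner u v m = (u - u * v * u) * u ^ m * (1 - u * v) := by
      rw [corner]; noncomm_ring
    rw [hy, ← mul_smul, this, hrel.mul_mul_left, sub_self, zero_mul, zero_mul, zero_smul]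
  have hvy : v ^ (m + 1) • y = 0 := by
    rw [hy, ← mul_smul, hrel.pow_mul_corner, zero_smul]
  have huvy : ∀ j < m, u • v ^ (j + 1) • y = v ^ j • y := by
    intro j hj
    have := congrArg (· • x) (hrel.mul_pow_mul_corner m j hj)
    simp only [mul_smul, sub_smul, one_smul, zero_smul, ← hy, sub_eq_zero] at this
    rw [pow_succ', mul_smul, ← this]
  let φ : (Fin (m + 1) → F) →ₗ[F] N :=
    Fintype.linearCombination F fun i : Fin (m + 1) => v ^ (m - i.1) • y
  have hφ : ∀ i : Fin (m + 1), φ (Pi.single i 1) = v ^ (m - i.1) • y := fun i => by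
    rw [Fintype.linearCombination_apply_single, one_smul]
  refine ⟨φ, fun h => hx ?_, fun w => ?_, fun w => ?_⟩
  · simpa [h] using (hφ (Fin.last m)).symm
  · suffices φ ∘ₗ shiftUp F (m + 1) = Algebra.lsmul F F N u ∘ₗ φ from LinearMap.congr_fun this w
    refine (Pi.basisFun F _).ext fun i => ?_
    have hi := i.2
    rw [Pi.basisFun_apply, LinearMap.comp_apply, LinearMap.comp_apply, hφ, shiftUp_single]
    change _ = u • v ^ (m - i.1) • y
    split_ifs with h
    · rw [hφ, show m - i.1 = m - (i.1 + 1) + 1 by omega, huvy _ (by omega)]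
    · rw [map_zero, show m - i.1 = 0 by omega, pow_zero, one_smul, huy]
  · suffices φ ∘ₗ shiftDown F (m + 1) = Algebra.lsmul F F N v ∘ₗ φ from
      LinearMap.congr_fun this w
    refine (Pi.basisFun F _).ext fun i => ?_
    have hi := i.2
    rw [Pi.basisFun_apply, LinearMap.comp_apply, LinearMap.comp_apply, hφ, shiftDown_single]
    change _ = v • v ^ (m - i.1) • y
    rw [← mul_smul, ← pow_succ']
    split_ifs with h
    · rw [hφ]
      congr 2
      simp only
      omega
    · rw [map_zero, show m - i.1 = m by omega, hvy]

variable [IsSimpleModule B N] [FiniteDimensional F N]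

/-- A central generator acts on a finite-dimensional simple module as a scalar. -/
theorem exists_smul_eq_of_central [IsAlgClosed F] (hz : ∀ b : B, z * b = b * z) :
    ∃ c : F, ∀ w : N, z • w = c • w := by
  have := IsSimpleModule.nontrivial B N
  obtain ⟨c, hc⟩ := Module.End.exists_eigenvalue (Algebra.lsmul F F N z)
  let K : Submodule B N :=
    { Module.End.eigenspace (Algebra.lsmul F F N z) c with
      smul_mem' := fun b w hw => by
        have hw' : z • w = c • w := Module.End.mem_eigenspace_iff.1 hw
        refine Module.End.mem_eigenspace_iff.2 ?_
        change z • b • w = c • b • w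
        rw [← mul_smul, hz, mul_smul, hw', smul_comm] }
  refine ⟨c, fun w => ?_⟩
  rcases eq_bot_or_eq_top K with h | h
  · obtain ⟨x, hx, hx0⟩ := hc.exists_hasEigenvector
    exact absurd ((Submodule.eq_bot_iff K).1 h x hx) hx0
  · exact Module.End.mem_eigenspace_iff.1 ((Submodule.eq_top_iff' (p := K)).1 h w)

theorem finrank_eq_one_of_inverse (hgen : Algebra.adjoin F {u, v, z} = ⊤)
    [IsAlgClosed F] {c : F} (hz : ∀ w : N, z • w = c • w)
    (hvu : ∀ w : N, v • u • w = w) : Module.finrank F N = 1 := by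
  have := IsSimpleModule.nontrivial B N
  obtain ⟨μ, hμ⟩ := Module.End.exists_eigenvalue (Algebra.lsmul F F N u)
  obtain ⟨x, hx, hx0⟩ := hμ.exists_hasEigenvector
  have hux : u • x = μ • x := Module.End.mem_eigenspace_iff.1 hx
  have hvx : μ • v • x = x := by rw [← smul_comm, ← hux, hvu]
  have hμ0 : μ ≠ 0 := by rintro rfl; exact hx0 (by rw [← hvx, zero_smul])
  have hvx' : v • x = μ⁻¹ • x := by rw [← hvx, smul_smul, inv_mul_cancel₀ hμ0, one_smul, hvx]
  refine finrank_eq_one_iff_of_nonzero x hx0 |>.2 ?_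
  have key : ∀ (b : B) (d : F), b • x = d • x → ∀ w ∈ F ∙ x, b • w ∈ F ∙ x := by
    rintro b d hb w hw
    obtain ⟨r, rfl⟩ := Submodule.mem_span_singleton.1 hw
    rw [smul_comm, hb, smul_smul]
    exact Submodule.smul_mem _ _ (Submodule.mem_span_singleton_self x)
  exact eq_top_of_stable hgen _ (key u μ hux) (key v _ hvx') (key z c (hz x))
    (by simpa using hx0)

theorem finrank_eq_one_of_corner_eq_zero (hgen : Algebra.adjoin F {u, v, z} = ⊤)
    [IsAlgClosed F] {c : F}
    (hz : ∀ w : N, z • w = c • w) (hrel : JordanRelations u v)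
    (h : ∀ (m : ℕ) (w : N), corner u v m • w = 0) : Module.finrank F N = 1 := by
  refine finrank_eq_one_of_inverse hgen hz ?_
  by_cases he : ∀ w : N, u • v • w = w
  · have huv : Algebra.lsmul F F N u * Algebra.lsmul F F N v = 1 := LinearMap.ext he
    exact LinearMap.congr_fun (mul_eq_one_comm.1 huv)
  push Not at he
  obtain ⟨x, hx⟩ := he
  let K : Submodule F N :=
    ⨅ j : ℕ, LinearMap.ker (Algebra.lsmul F F N ((1 - v * u) * u ^ j))
  have hmem : ∀ w, w ∈ K ↔ ∀ j : ℕ, ((1 - v * u) * u ^ j) • w = 0 := fun w => by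
    rw [Submodule.mem_iInf]
    rfl
  have hK : K = ⊤ := by
    refine eq_top_of_stable hgen K (fun w hw => ?_) (fun w hw => ?_) (fun w hw => ?_) ?_
    · refine (hmem _).2 fun j => ?_
      rw [← mul_smul, mul_assoc, ← pow_succ]
      exact (hmem w).1 hw (j + 1)
    · refine (hmem _).2 fun j => ?_
      rw [← mul_smul]
      cases j with
      | zero =>
        rw [pow_zero, mul_one, sub_mul, one_mul, hrel.mul_mul_right, sub_self, zero_smul]
      | succ j =>
        have : (1 - v * u) * u ^ (j + 1) * v = (1 - v * u) * u ^ j - corner u v j := by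
          rw [corner, pow_succ]; noncomm_ring
        rw [this, sub_smul, h, (hmem w).1 hw, sub_zero]
    · rw [hz]; exact K.smul_mem c hw
    · intro hbot
      have : (1 - u * v) • x ∈ K := (hmem _).2 fun j => by
        rw [← mul_smul]; exact h j x
      rw [hbot, Submodule.mem_bot, sub_smul, one_smul, mul_smul, sub_eq_zero] at this
      exact hx this.symm
  intro w
  have := (hmem w).1 (hK ▸ Submodule.mem_top) 0
  rw [pow_zero, mul_one, sub_smul, one_smul, mul_smul, sub_eq_zero] at this
  exact this.symm

end Generated

section Construction

variable (F : Type) [Field F] (a : ℕ → ℕ)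

namespace blockAlgebra

variable {a} in
/-- The natural module of a block. -/
def BlockModule (p : Σ n, Fin (a n)) : Type := Fin p.1 → F

namespace BlockModule

variable (p : Σ n, Fin (a n))

instance : AddCommGroup (BlockModule F p) := inferInstanceAs (AddCommGroup (Fin p.1 → F))

instance : Module F (BlockModule F p) := inferInstanceAs (Module F (Fin p.1 → F))

theorem finrank_eq : Module.finrank F (BlockModule F p) = p.1 :=
  Module.finrank_fin_fun F

end BlockModule

end blockAlgebra

variable [IsAlgClosed F]

/-- Pairwise distinct scalars. -/
noncomputable def blockScalar : ℕ ↪ F :=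
  haveI := IsAlgClosed.instInfinite (K := F)
  Infinite.natEmbedding F

/-- The product of matrix algebras containing `a n` factors of size `n` for each `n`. -/
abbrev BlockProduct : Type := ∀ p : Σ n, Fin (a n), Module.End F (Fin p.1 → F)

/-- The simultaneous Jordan block. -/
def blockUp : BlockProduct F a := fun p => shiftUp F p.1

/-- The simultaneous transposed Jordan block. -/
def blockDown : BlockProduct F a := fun p => shiftDown F p.1

/-- The central element separating blocks of equal size. -/
noncomputable def blockCentral : BlockProduct F a :=
  fun p => algebraMap F _ (blockScalar F p.2.1)

/-- The subalgebra of the product of blocks generated by the Jordan blocks, their transposes and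
the separating central element. -/
abbrev blockAlgebra : Subalgebra F (BlockProduct F a) :=
  Algebra.adjoin F {blockUp F a, blockDown F a, blockCentral F a}

namespace blockAlgebra

theorem finiteType : Algebra.FiniteType F (blockAlgebra F a) := by
  classical
  rw [← Subalgebra.fg_iff_finiteType]
  exact ⟨{blockUp F a, blockDown F a, blockCentral F a}, by simp⟩

/-- The projection to a block. -/
def proj (p : Σ n, Fin (a n)) : blockAlgebra F a →ₐ[F] Module.End F (Fin p.1 → F) :=
  (Pi.evalAlgHom F _ p).comp (blockAlgebra F a).val

/-- The generator given by the Jordan blocks. -/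
def up : blockAlgebra F a := ⟨blockUp F a, Algebra.subset_adjoin (by simp)⟩

/-- The generator given by the transposed Jordan blocks. -/
def down : blockAlgebra F a := ⟨blockDown F a, Algebra.subset_adjoin (by simp)⟩

/-- The central generator. -/
noncomputable def central : blockAlgebra F a :=
  ⟨blockCentral F a, Algebra.subset_adjoin (by simp)⟩

theorem proj_up (p) : proj F a p (up F a) = shiftUp F p.1 := rfl

theorem proj_down (p) : proj F a p (down F a) = shiftDown F p.1 := rfl

theorem proj_central (p) :
    proj F a p (central F a) = algebraMap F _ (blockScalar F p.2.1) := rfl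

theorem ext_proj (x y : blockAlgebra F a) (h : ∀ p, proj F a p x = proj F a p y) : x = y :=
  Subtype.ext (funext h)

theorem adjoin_generators : Algebra.adjoin F {up F a, down F a, central F a} = ⊤ := by
  have h := Algebra.adjoin_adjoin_coe_preimage (R := F)
    (s := {blockUp F a, blockDown F a, blockCentral F a})
  convert h using 2
  ext x
  simp [up, down, central, Subtype.ext_iff]

theorem central_mul (b : blockAlgebra F a) : central F a * b = b * central F a :=
  ext_proj F a _ _ fun p => by
    rw [map_mul, map_mul, proj_central, Algebra.commutes]

theorem jordanRelations : JordanRelations (up F a) (down F a) :=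
  .of_jointly_injective (fun p => (proj F a p).toRingHom) (ext_proj F a)
    fun _ => jordanRelations_shift

theorem aeval_central_mul_corner (m : ℕ) :
    aeval (central F a) (∏ i : Fin (a (m + 1)), (X - C (blockScalar F i.1))) *
      corner (up F a) (down F a) m = 0 := by
  refine ext_proj F a _ _ fun p => ?_
  have hc : proj F a p (corner (up F a) (down F a) m) =
      corner (shiftUp F p.1) (shiftDown F p.1) m := 
    map_corner (proj F a p).toRingHom (up F a) (down F a) m
  rw [map_mul, map_zero, hc, ← aeval_algHom_apply, proj_central, aeval_algebraMap_apply]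
  obtain ⟨n, i⟩ := p
  by_cases h : n = m + 1
  · subst h
    rw [coe_aeval_eq_eval, eval_prod, Finset.prod_eq_zero (Finset.mem_univ i) (by simp),
      map_zero, zero_mul]
  · rw [corner_shift_eq_zero h, mul_zero]

namespace BlockModule

variable (p : Σ n, Fin (a n))

instance : Module (blockAlgebra F a) (BlockModule F p) :=
  Module.compHom (Fin p.1 → F) (proj F a p).toRingHom

theorem smul_def (b : blockAlgebra F a) (w : BlockModule F p) : b • w = proj F a p b w := rfl

instance : IsScalarTower F (blockAlgebra F a) (BlockModule F p) where
  smul_assoc c b w := by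
    rw [smul_def, map_smul]
    rfl

theorem central_smul (w : BlockModule F p) : central F a • w = blockScalar F p.2.1 • w := rfl

theorem isSimpleModule (hp : p.1 ≠ 0) :
    IsSimpleModule (blockAlgebra F a) (BlockModule F p) := by
  have hnt : Nontrivial (BlockModule F p) :=
    Module.nontrivial_of_finrank_pos (R := F) (by rw [finrank_eq]; omega)
  rw [isSimpleModule_iff_toSpanSingleton_surjective]
  refine ⟨hnt, fun y hy w => ?_⟩
  obtain ⟨k, hk⟩ := Function.ne_iff.1 hy
  refine ⟨∑ j : Fin p.1, ((w j : F) * (y k : F)⁻¹) •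
    (up F a ^ j.1 * (1 - up F a * down F a) * down F a ^ k.1), ?_⟩
  rw [LinearMap.toSpanSingleton_apply, Finset.sum_smul]
  have : ∀ j : Fin p.1, (((w j : F) * (y k : F)⁻¹) •
      (up F a ^ j.1 * (1 - up F a * down F a) * down F a ^ k.1)) • y =
      (Pi.single j (w j) : Fin p.1 → F) := by
    intro j
    rw [smul_assoc]
    have h := shiftUp_pow_mul_shiftDown_pow_apply (F := F) j k y
    have h' : (up F a ^ j.1 * (1 - up F a * down F a) * down F a ^ k.1) • y =
        ((y k : F) • (Pi.single j 1 : Fin p.1 → F) : Fin p.1 → F) := by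
      have hmap : proj F a p (up F a ^ j.1 * (1 - up F a * down F a) * down F a ^ k.1) =
          shiftUp F p.1 ^ j.1 * (1 - shiftUp F p.1 * shiftDown F p.1) * shiftDown F p.1 ^ k.1 :=
        map_pow_mul_one_sub_mul_pow (proj F a p).toRingHom (up F a) (down F a) j k
      rw [← h, smul_def, hmap]
    rw [h']
    change ((w j : F) * (y k : F)⁻¹) • ((y k : F) • (Pi.single j 1 : Fin p.1 → F)) = _
    rw [smul_smul, inv_mul_cancel_right₀ hk, ← Pi.single_smul, smul_eq_mul, mul_one]
  rw [Finset.sum_congr rfl fun j _ => this j]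
  exact Finset.univ_sum_single (M := fun _ => F) w

theorem isEmpty_equiv {n : ℕ} (hn : n ≠ 0) {i j : Fin (a n)} (hij : i ≠ j) :
    IsEmpty (BlockModule F (a := a) ⟨n, i⟩ ≃ₗ[blockAlgebra F a] BlockModule F ⟨n, j⟩) := by
  refine ⟨fun e => hij ?_⟩
  have hnt : Nontrivial (BlockModule F (a := a) ⟨n, i⟩) :=
    Module.nontrivial_of_finrank_pos (R := F) (by rw [finrank_eq]; exact Nat.pos_of_ne_zero hn)
  obtain ⟨w, hw⟩ := exists_ne (0 : BlockModule F (a := a) ⟨n, i⟩)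
  have h := e.map_smul (central F a) w
  rw [central_smul, central_smul, ← algebraMap_smul (blockAlgebra F a), e.map_smul,
    algebraMap_smul, ← sub_eq_zero, ← sub_smul, smul_eq_zero, sub_eq_zero] at h
  exact Fin.ext ((blockScalar F).injective (h.resolve_right (e.map_ne_zero_iff.2 hw)))

end BlockModule

/-- Every finite-dimensional simple module of dimension at least two is the natural module of a
block. -/
theorem exists_equiv_blockModule {N : Type*} [AddCommGroup N] [Module F N]
    [Module (blockAlgebra F a) N] [IsScalarTower F (blockAlgebra F a) N]
    [IsSimpleModule (blockAlgebra F a) N] {n : ℕ} (hn : 2 ≤ n) (hN : Module.finrank F N = n) :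
    ∃ i : Fin (a n), Nonempty (N ≃ₗ[blockAlgebra F a] BlockModule F (a := a) ⟨n, i⟩) := by
  have : FiniteDimensional F N := Module.finite_of_finrank_pos (by omega)
  have hgen := adjoin_generators F a
  obtain ⟨c, hc⟩ := exists_smul_eq_of_central (F := F) (B := blockAlgebra F a) (N := N)
    (central_mul F a)
  obtain ⟨m, x, hx⟩ : ∃ (m : ℕ) (x : N), corner (up F a) (down F a) m • x ≠ 0 := by
    by_contra! h
    have := finrank_eq_one_of_corner_eq_zero hgen hc (jordanRelations F a) h
    omega
  obtain ⟨i, hi⟩ : ∃ i : Fin (a (m + 1)), c = blockScalar F i.1 := by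
    have h := congrArg (· • x) (aeval_central_mul_corner F a m)
    have hz : Algebra.lsmul F F N (central F a) = algebraMap F _ c := LinearMap.ext hc
    have hP : ∀ (P : F[X]) (w : N), aeval (central F a) P • w = P.eval c • w := by
      intro P w
      have := LinearMap.congr_fun (aeval_algHom_apply (Algebra.lsmul F F N) (central F a) P) w
      rw [hz, aeval_algebraMap_apply, coe_aeval_eq_eval] at this
      exact this.symm
    simp only [mul_smul, zero_smul, hP] at h
    have h0 := (smul_eq_zero.1 h).resolve_right hx
    rw [eval_prod, Finset.prod_eq_zero_iff] at h0
    obtain ⟨i, -, hi⟩ := h0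
    exact ⟨i, by simpa [sub_eq_zero] using hi⟩
  obtain ⟨φ, hφ, hu, hv⟩ := exists_hom_of_corner_ne_zero (F := F) (jordanRelations F a) hx
  let ψ : BlockModule F (a := a) ⟨m + 1, i⟩ →ₗ[F] N := φ
  have := BlockModule.isSimpleModule F a ⟨m + 1, i⟩ m.succ_ne_zero
  obtain ⟨e⟩ := nonempty_equiv_of_hom (B := blockAlgebra F a) (u := up F a) (v := down F a)
    (z := central F a) hgen ψ hφ (fun w => hu w) (fun w => hv w) fun w => by
      rw [BlockModule.central_smul, hc, hi, map_smul]
  have hdim : m + 1 = n := by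
    rw [← hN, ← (e.restrictScalars F).finrank_eq, BlockModule.finrank_eq]
  subst hdim
  exact ⟨i, ⟨e.symm⟩⟩

end blockAlgebra

end Construction

/-- **Main theorem.** Over an algebraically closed field `F`, for any sequence
`(a_n)_{n ≥ 2}` of non-negative integers there exists an affine `F`-algebra having
precisely `a n` non-isomorphic simple modules of `F`-dimension `n` for every `n ≥ 2`. -/
theorem stmt_0 (F : Type) [Field F] [IsAlgClosed F] (a : ℕ → ℕ) :
    Nonempty (AffineAlgWithPrescribedSimples.{u} F a) := by
  refine ⟨⟨blockAlgebra F a, blockAlgebra.finiteType F a, fun n hn => ⟨fun i =>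
    ⟨blockAlgebra.BlockModule F ⟨n, i⟩,
      blockAlgebra.BlockModule.isSimpleModule F a _ (by simp only; omega),
      blockAlgebra.BlockModule.finrank_eq F a _⟩, fun i j hij =>
    blockAlgebra.BlockModule.isEmpty_equiv F a (by omega) hij, ?_⟩⟩⟩
  intro N _ _ _ _ _ hN
  exact blockAlgebra.exists_equiv_blockModule F a hn hN
end

section
/- With the construction below, for every integer n ≥ 2 with n ∉ S (i.e., a_n = 0), the algebra B has no simple left B-module of F-dimension n. -/
open Matrix

/-- The `n×n` cyclic permutation matrix: identity block `I_{n-1}` in the upper right and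
a `1` in the lower-left corner. -/
def cycMat (F : Type*) [Semiring F] (n : ℕ) : Matrix (Fin n) (Fin n) F :=
  Matrix.of fun k l => if (l : ℕ) = ((k : ℕ) + 1) % n then 1 else 0

/-- The matrix unit `E₁₁`, with `1` in the upper-left entry and zeros elsewhere. -/
def e11 (F : Type*) [Semiring F] (n : ℕ) : Matrix (Fin n) (Fin n) F :=
  Matrix.of fun k l => if (k : ℕ) = 0 ∧ (l : ℕ) = 0 then 1 else 0

/-- Index set: pairs `(n, i)` with `n ≥ 2` and `1 ≤ i ≤ a n` (here `0`-indexed: `i < a n`).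
Note that `n` lies in the support `S` of `a` automatically, since `i < a n` forces `a n ≠ 0`. -/
abbrev Idx (a : ℕ → ℕ) : Type := {p : ℕ × ℕ // 2 ≤ p.1 ∧ p.2 < a p.1}

/-- The ambient algebra `A = ∏_{n ∈ S} ∏_{i=1}^{a n} M_n(F)`. -/
abbrev ConstrA (F : Type*) [Field F] (a : ℕ → ℕ) : Type _ :=
  ∀ p : Idx a, Matrix (Fin p.1.1) (Fin p.1.1) F

/-- The element `e` whose `(n,i)` component is `λ_{n,i} • E₁₁`. -/
def elemE {F : Type*} [Field F] (a : ℕ → ℕ) (lam : Idx a → F) : ConstrA F a :=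
  fun p => lam p • e11 F p.1.1

/-- The element `σ` whose `(n,i)` component is the cyclic permutation matrix `P_n`. -/
def elemS (F : Type*) [Field F] (a : ℕ → ℕ) : ConstrA F a :=
  fun p => cycMat F p.1.1
/-- `B = F⟨e, σ⟩`, the unital `F`-subalgebra of `A` generated by `e` and `σ`. -/
abbrev ConstrB (F : Type*) [Field F] (a : ℕ → ℕ) (lam : Idx a → F) :
    Subalgebra F (ConstrA F a) :=
  Algebra.adjoin F {elemE a lam, elemS F a}

/-- Endomorphisms that commute on a nonzero invariant subspace of a finite-dimensional space over an
algebraically closed field have a common eigenvector there. -/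
theorem exists_common_eigenvector {F N ι : Type*} [Field F] [IsAlgClosed F] [AddCommGroup N]
    [Module F N] [FiniteDimensional F N] (T : ι → Module.End F N) (V : Submodule F N)
    (hV : V ≠ ⊥) (hmaps : ∀ i, ∀ x ∈ V, T i x ∈ V)
    (hcomm : ∀ i j, ∀ x ∈ V, T i (T j x) = T j (T i x)) :
    ∃ v ∈ V, v ≠ 0 ∧ ∃ χ : ι → F, ∀ i, T i v = χ i • v := by
  obtain ⟨W, ⟨hWV, hW0, hWT⟩, hmin⟩ := (wellFounded_lt (α := Submodule F N)).has_min
    {W | W ≤ V ∧ W ≠ ⊥ ∧ ∀ i, ∀ x ∈ W, T i x ∈ W} ⟨V, le_rfl, hV, hmaps⟩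
  have hscalar : ∀ i, ∃ c : F, ∀ x ∈ W, T i x = c • x := by
    intro i
    have : Nontrivial W := Submodule.nontrivial_iff_ne_bot.mpr hW0
    obtain ⟨c, hc⟩ := Module.End.exists_eigenvalue ((T i).restrict (hWT i))
    obtain ⟨w, hw⟩ := hc.exists_hasEigenvector
    have hw1 : T i w = c • (w : N) := congrArg Subtype.val hw.apply_eq_smul
    refine ⟨c, fun x hx => ?_⟩
    have hle : W ≤ (T i).eigenspace c := by
      by_contra hnot
      refine hmin (W ⊓ (T i).eigenspace c) ⟨inf_le_left.trans hWV, ?_, ?_⟩ ?_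
      · intro h
        have : (w : N) ∈ W ⊓ (T i).eigenspace c := ⟨w.2, Module.End.mem_eigenspace_iff.mpr hw1⟩
        rw [h, Submodule.mem_bot] at this
        exact hw.2 (Subtype.ext this)
      · rintro j y ⟨hyW, hy⟩
        refine ⟨hWT j y hyW, Module.End.mem_eigenspace_iff.mpr ?_⟩
        rw [hcomm i j y (hWV hyW), Module.End.mem_eigenspace_iff.mp hy, map_smul]
      · exact inf_lt_left.mpr hnot
    exact Module.End.mem_eigenspace_iff.mp (hle hx)
  choose χ hχ using hscalar
  obtain ⟨v, hv, hv0⟩ := Submodule.exists_mem_ne_zero_of_ne_bot hW0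
  exact ⟨v, hWV hv, hv0, χ, fun i => hχ i v hv⟩

/-- An irreducible pair of endomorphisms `E`, `S` with `E ≠ 0` satisfying the relations of
`elemE` and `elemS`, on a space of finite dimension `n ≥ 2`, comes with a vector `v` on which the
operators `E * S ^ k` act by a nonzero scalar when `n ∣ k` and by zero otherwise. -/
theorem exists_apply_eq_ite_dvd {F N : Type*} [Field F] [IsAlgClosed F] [AddCommGroup N]
    [Module F N] [FiniteDimensional F N] (E S : Module.End F N) (hE : E ≠ 0)
    (hirr : ∀ W : Submodule F N, (∀ x ∈ W, E x ∈ W) → (∀ x ∈ W, S x ∈ W) → W = ⊥ ∨ W = ⊤)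
    (hrel : ∀ k j, E * S ^ k * E * S ^ j * E = E * S ^ k.gcd j * E * E)
    (hdim : 2 ≤ Module.finrank F N) :
    ∃ v : N, v ≠ 0 ∧ ∃ μ : F, μ ≠ 0 ∧
      ∀ k, E ((S ^ k) v) = (if Module.finrank F N ∣ k then μ else 0) • v := by
  have hrel' : ∀ k j u, E ((S ^ k) (E ((S ^ j) (E u)))) = E ((S ^ k.gcd j) (E (E u))) :=
    fun k j u => LinearMap.congr_fun (hrel k j) u
  have hsep : ∀ x, (∀ k, E ((S ^ k) x) = 0) → x = 0 := by
    let W : Submodule F N := ⨅ k, LinearMap.ker (E * S ^ k)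
    have hW : ∀ x, x ∈ W ↔ ∀ k, E ((S ^ k) x) = 0 := fun x => by
      simp [W, Submodule.mem_iInf]
    have hE0 : ∀ x ∈ W, E x = 0 := fun x hx => by simpa using (hW x).1 hx 0
    have : W = ⊥ := by
      refine (hirr W (fun x hx => ?_) (fun x hx => ?_)).resolve_right fun h => ?_
      · rw [hE0 x hx]; exact W.zero_mem
      · rw [hW] at hx ⊢
        intro k
        simpa [pow_succ] using hx (k + 1)
      · exact hE (LinearMap.ext fun x => hE0 x (h ▸ Submodule.mem_top))
    intro x hx
    rw [← hW, this] at hx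
    simpa using hx
  obtain ⟨v, ⟨u, rfl⟩, hv, χ, hχ⟩ := exists_common_eigenvector (fun k : ℕ => E * S ^ k)
    (LinearMap.range E) (by simpa [LinearMap.range_eq_bot] using hE)
    (fun k x _ => ⟨(S ^ k) x, rfl⟩) (by
      rintro i j _ ⟨u, rfl⟩
      simp only [Module.End.mul_apply]
      rw [hrel', hrel', Nat.gcd_comm])
  simp only [Module.End.mul_apply] at hχ
  have hmul : ∀ k j, χ k * χ j = χ (k.gcd j) * χ 0 := by
    intro k j
    have h := hrel' k j u
    have h0 := hχ 0
    simp only [pow_zero, Module.End.one_apply] at h0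
    rw [hχ, h0] at h
    simp only [map_smul, hχ, smul_smul] at h
    have := smul_left_injective F hv h
    linear_combination this
  set v := E u
  have hμ : χ 0 ≠ 0 := by
    intro h0
    refine hv (hsep v fun k => ?_)
    have : χ k = 0 := by simpa [h0] using hmul k k
    rw [hχ, this, zero_smul]
  have hval : ∀ k, χ k ≠ 0 → χ k = χ 0 := fun k hk => by
    have h := hmul k k
    rw [Nat.gcd_self] at h
    exact mul_left_cancel₀ hk h
  have htop : ∀ W : Submodule F N, v ∈ W → (∀ x ∈ W, E x ∈ W) → (∀ x ∈ W, S x ∈ W) → W = ⊤ :=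
    fun W hvW h1 h2 => (hirr W h1 h2).resolve_left fun h => hv (by simpa [h] using hvW)
  have hpos : ∃ m, 0 < m ∧ χ m ≠ 0 := by
    by_contra! hnone
    have hS : S v = 0 := hsep _ fun k => by
      have := hχ (k + 1)
      rw [hnone (k + 1) k.succ_pos, zero_smul] at this
      simpa [pow_succ] using this
    have h1 : Submodule.span F {v} = ⊤ := by
      refine htop _ (Submodule.mem_span_singleton_self v) ?_ ?_ <;> intro x hx <;>
        obtain ⟨c, rfl⟩ := Submodule.mem_span_singleton.1 hx
      · have h0 : E v = χ 0 • v := by simpa using hχ 0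
        rw [map_smul, h0]
        exact Submodule.smul_mem _ _ (Submodule.smul_mem _ _ (Submodule.mem_span_singleton_self v))
      · rw [map_smul, hS, smul_zero]
        exact Submodule.zero_mem _
    have := finrank_span_singleton (K := F) hv
    rw [h1, finrank_top] at this
    omega
  classical
  obtain ⟨hm0, hm⟩ := Nat.find_spec hpos
  set m := Nat.find hpos
  have hdvd : ∀ k, χ k = if m ∣ k then χ 0 else 0 := by
    intro k
    split_ifs with hk
    · apply hval
      intro h
      have := hmul m k
      rw [Nat.gcd_eq_left hk, h, mul_zero] at this
      exact mul_ne_zero hm hμ this.symm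
    · by_contra h
      apply hk
      have h1 : χ (m.gcd k) ≠ 0 := fun h' => mul_ne_zero hm h (by rw [hmul, h', zero_mul])
      have h2 : m ≤ m.gcd k := Nat.find_min' hpos ⟨Nat.gcd_pos_of_pos_left k hm0, h1⟩
      rw [le_antisymm h2 (Nat.gcd_le_left k hm0)]
      exact Nat.gcd_dvd_right m k
  have hadd : ∀ k j, E ((S ^ k) ((S ^ j) v)) = (if m ∣ k + j then χ 0 else 0) • v := by
    intro k j
    rw [← hdvd, ← hχ, pow_add, Module.End.mul_apply]
  have hSm : (S ^ m) v = v := by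
    rw [← sub_eq_zero]
    refine hsep _ fun k => ?_
    simp only [map_sub, hadd, hχ, hdvd k, Nat.dvd_add_self_right, sub_self]
  have hli : LinearIndependent F (fun i : Fin m => (S ^ (i : ℕ)) v) := by
    rw [Fintype.linearIndependent_iff]
    intro g hg i
    have h := congrArg (fun x => E ((S ^ (m - i)) x)) hg
    simp only [map_sum, map_smul, map_zero, hadd] at h
    rw [Finset.sum_eq_single i] at h
    · rw [if_pos (by rw [Nat.sub_add_cancel i.2.le])] at h
      simpa [hv, hμ] using h
    · intro j _ hji
      rw [if_neg, zero_smul, smul_zero]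
      rintro ⟨c, hc⟩
      apply hji
      ext
      have hi := i.2
      have hj := j.2
      have hc1 : c = 1 := by
        have h1 : 0 < m * c := by omega
        have h2 : m * c < m * 2 := by omega
        have := Nat.lt_of_mul_lt_mul_left h2
        have := Nat.pos_of_ne_zero (n := c) (by rintro rfl; simp at h1)
        omega
      subst hc1
      omega
    · simp
  have hspan : Submodule.span F (Set.range fun i : Fin m => (S ^ (i : ℕ)) v) = ⊤ := by
    have hvmem : v ∈ Submodule.span F (Set.range fun i : Fin m => (S ^ (i : ℕ)) v) :=
      Submodule.subset_span ⟨⟨0, hm0⟩, by simp⟩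
    refine htop _ hvmem ?_ ?_ <;> intro x hx <;> induction hx using Submodule.span_induction with
      | mem x hx => ?_
      | zero => simp
      | add x y _ _ hx hy => rw [map_add]; exact Submodule.add_mem _ hx hy
      | smul c x _ hx => rw [map_smul]; exact Submodule.smul_mem _ _ hx
    · obtain ⟨i, rfl⟩ := hx
      simp only [hχ]
      exact Submodule.smul_mem _ _ hvmem
    · obtain ⟨i, rfl⟩ := hx
      simp only [← Module.End.mul_apply, ← pow_succ']
      rcases Nat.lt_or_ge (i + 1) m with h | h
      · exact Submodule.subset_span ⟨⟨i + 1, h⟩, rfl⟩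
      · rw [show (i : ℕ) + 1 = m by omega, hSm]
        exact hvmem
  have hfin : Module.finrank F N = m := by
    have := finrank_span_eq_card hli
    rwa [hspan, finrank_top, Fintype.card_fin] at this
  refine ⟨v, hv, χ 0, hμ, fun k => ?_⟩
  rw [hχ, hdvd, hfin]

theorem cycMat_pow_apply {F : Type*} [Semiring F] {n : ℕ} (k : ℕ) (i j : Fin n) :
    (cycMat F n ^ k) i j = if (j : ℕ) = (i + k) % n then 1 else 0 := by
  induction k generalizing i with
  | zero => simp [Matrix.one_apply, Nat.mod_eq_of_lt i.2, Fin.ext_iff, eq_comm]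
  | succ k ih =>
    have hn : 0 < n := i.pos
    rw [pow_succ', Matrix.mul_apply, Finset.sum_eq_single ⟨(i + 1) % n, Nat.mod_lt _ hn⟩]
    · rw [ih]
      simp [cycMat, add_assoc, add_comm 1 k]
    · intro l _ hl
      rw [cycMat, Matrix.of_apply, if_neg (fun h => hl (Fin.ext h)), zero_mul]
    · simp

theorem e11_mul_cycMat_pow_mul_e11 (F : Type*) [Semiring F] (n k : ℕ) :
    e11 F n * cycMat F n ^ k * e11 F n = if n ∣ k then e11 F n else 0 := by
  rcases n with _ | n
  · exact Subsingleton.elim _ _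
  have he : e11 F (n + 1) = Matrix.single 0 0 1 := by
    ext i j
    rw [e11, Matrix.of_apply, Matrix.single_apply]
    refine if_congr ?_ rfl rfl
    rw [Fin.ext_iff, Fin.ext_iff, Fin.val_zero, eq_comm, eq_comm (a := (j : ℕ))]
  rw [he, Matrix.single_mul_mul_single, cycMat_pow_apply]
  have hk : ((0 : Fin (n + 1)) : ℕ) = (((0 : Fin (n + 1)) : ℕ) + k) % (n + 1) ↔ n + 1 ∣ k := by
    rw [Fin.val_zero, zero_add, eq_comm, Nat.dvd_iff_mod_eq_zero]
  simp only [hk]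
  split_ifs <;> simp

theorem elemE_mul_elemS_pow_mul_elemE {F : Type*} [Field F] (a : ℕ → ℕ) (lam : Idx a → F)
    (k : ℕ) (p : Idx a) :
    (elemE a lam * elemS F a ^ k * elemE a lam) p =
      if p.1.1 ∣ k then (lam p * lam p) • e11 F p.1.1 else 0 := by
  simp only [elemE, elemS, Pi.mul_apply, Pi.pow_apply, Matrix.smul_mul, Matrix.mul_smul,
    e11_mul_cycMat_pow_mul_e11, smul_ite, smul_smul, smul_zero]

theorem elemE_elemS_gcd {F : Type*} [Field F] (a : ℕ → ℕ) (lam : Idx a → F) (k j : ℕ) :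
    elemE a lam * elemS F a ^ k * elemE a lam * elemS F a ^ j * elemE a lam =
      elemE a lam * elemS F a ^ k.gcd j * elemE a lam * elemE a lam := by
  funext p
  have h := e11_mul_cycMat_pow_mul_e11 F p.1.1
  have h0 := h 0
  simp only [pow_zero, mul_one, dvd_zero, if_true] at h0
  simp only [elemE, elemS, Pi.mul_apply, Pi.pow_apply, Matrix.smul_mul, Matrix.mul_smul, h,
    Nat.dvd_gcd_iff]
  by_cases hk : p.1.1 ∣ k <;> by_cases hj : p.1.1 ∣ j <;> simp [hk, hj, h, h0]

theorem prod_elemE_elemS_sub_eq_zero {F : Type*} [Field F] (a : ℕ → ℕ) (lam : Idx a → F)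
    {n : ℕ} (hn : 2 ≤ n) (hnS : a n = 0) :
    (n.properDivisors.toList.map fun d => elemE a lam * elemS F a ^ n * elemE a lam -
      elemE a lam * elemS F a ^ d * elemE a lam).prod = 0 := by
  funext p
  refine (map_list_prod
    (Pi.evalRingHom (fun p : Idx a => Matrix (Fin p.1.1) (Fin p.1.1) F) p) _).trans ?_
  rw [List.map_map]
  apply List.prod_eq_zero
  rw [List.mem_map]
  by_cases hp : p.1.1 ∣ n
  · have hne : p.1.1 ≠ n := fun h => by
      have := p.2.2
      rw [h, hnS] at this
      exact Nat.not_lt_zero _ this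
    refine ⟨p.1.1, ?_, ?_⟩
    · rw [Finset.mem_toList, Nat.mem_properDivisors]
      exact ⟨hp, lt_of_le_of_ne (Nat.le_of_dvd (by omega) hp) hne⟩
    · simp only [Function.comp_apply, Pi.evalRingHom_apply, Pi.sub_apply,
        elemE_mul_elemS_pow_mul_elemE, hp, dvd_refl, if_true, sub_self]
  · refine ⟨1, ?_, ?_⟩
    · rw [Finset.mem_toList, Nat.mem_properDivisors]
      exact ⟨one_dvd n, by omega⟩
    · have h1 : ¬ p.1.1 ∣ 1 := fun h => hp (h.trans (one_dvd n))
      simp only [Function.comp_apply, Pi.evalRingHom_apply, Pi.sub_apply,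
        elemE_mul_elemS_pow_mul_elemE, hp, h1, if_false, sub_self]

universe u

set_option maxHeartbeats 1000000 in
set_option synthInstance.maxHeartbeats 200000 in
/-- For every `n ≥ 2` outside the support of `(a_n)` (i.e. with `a n = 0`), the algebra
`B = F⟨e,σ⟩` has no simple left `B`-module of `F`-dimension `n`. -/
theorem stmt_3 (F : Type*) [Field F] [IsAlgClosed F] (a : ℕ → ℕ) (lam : Idx a → F)
    (hlam_ne : ∀ p, lam p ≠ 0)
    (hlam : ∀ p q : Idx a, p.1.1 = q.1.1 → p ≠ q → lam p ≠ lam q ∧ lam p ≠ -lam q)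
    (n : ℕ) (hn : 2 ≤ n) (hnS : a n = 0)
    (N : Type u) [AddCommGroup N] [Module F N] [Module (↥(ConstrB F a lam)) N]
    [IsScalarTower F (↥(ConstrB F a lam)) N]
    (hsimple : IsSimpleModule (↥(ConstrB F a lam)) N) :
    Module.finrank F N ≠ n := by
  intro hdim
  have : FiniteDimensional F N := Module.finite_of_finrank_pos (by omega)
  let ρ : ConstrB F a lam →ₐ[F] Module.End F N := Algebra.lsmul F F N
  let e : ConstrB F a lam := ⟨elemE a lam, Algebra.subset_adjoin (by simp)⟩
  let s : ConstrB F a lam := ⟨elemS F a, Algebra.subset_adjoin (by simp)⟩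
  have hirr : ∀ W : Submodule F N, (∀ x ∈ W, ρ e x ∈ W) → (∀ x ∈ W, ρ s x ∈ W) →
      W = ⊥ ∨ W = ⊤ := by
    intro W he hs
    have hB : ∀ b : ConstrB F a lam, ∀ x ∈ W, b • x ∈ W := by
      rintro ⟨b, hb⟩
      induction hb using Algebra.adjoin_induction with
      | mem b hb =>
        rcases hb with rfl | rfl
        · exact he
        · exact hs
      | algebraMap r =>
        intro x hx
        have h : (algebraMap F (ConstrB F a lam) r) • x ∈ W := by
          rw [algebraMap_smul]
          exact W.smul_mem r hx
        exact h
      | add b c hb hc ihb ihc =>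
        intro x hx
        have h : ((⟨b, hb⟩ : ConstrB F a lam) + ⟨c, hc⟩) • x ∈ W := by
          rw [add_smul]
          exact W.add_mem (ihb x hx) (ihc x hx)
        exact h
      | mul b c hb hc ihb ihc =>
        intro x hx
        have h : ((⟨b, hb⟩ : ConstrB F a lam) * ⟨c, hc⟩) • x ∈ W := by
          rw [mul_smul]
          exact ihb _ (ihc x hx)
        exact h
    let W' : Submodule (ConstrB F a lam) N :=
      { W.toAddSubmonoid with smul_mem' := fun b x hx => hB b x hx }
    have hmem : ∀ x, x ∈ W' ↔ x ∈ W := fun x => Iff.rfl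
    rcases eq_bot_or_eq_top W' with h | h
    · left
      ext x
      rw [← hmem, h, Submodule.mem_bot, Submodule.mem_bot]
    · right
      ext x
      rw [← hmem, h]
      simp
  by_cases hE : ρ e = 0
  · have : Nontrivial N := Module.nontrivial_of_finrank_pos (R := F) (by omega)
    obtain ⟨c, hc⟩ := Module.End.exists_eigenvalue (ρ s)
    obtain ⟨v, hv⟩ := hc.exists_hasEigenvector
    have htop : Submodule.span F {v} = ⊤ := by
      refine (hirr _ ?_ ?_).resolve_left (by simpa using hv.2)
      · intro x _
        rw [hE]
        exact Submodule.zero_mem _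
      · intro x hx
        obtain ⟨d, rfl⟩ := Submodule.mem_span_singleton.1 hx
        rw [map_smul, hv.apply_eq_smul]
        exact Submodule.smul_mem _ _
          (Submodule.smul_mem _ _ (Submodule.mem_span_singleton_self v))
    have := finrank_span_singleton (K := F) hv.2
    rw [htop, finrank_top] at this
    omega
  obtain ⟨v, hv, μ, hμ, hact⟩ := exists_apply_eq_ite_dvd (ρ e) (ρ s) hE hirr
    (fun k j => by
      have h : e * s ^ k * e * s ^ j * e = e * s ^ k.gcd j * e * e :=
        Subtype.ext (elemE_elemS_gcd a lam k j)
      simpa only [map_mul, map_pow] using congrArg ρ h) (hdim ▸ hn)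
  rw [hdim] at hact
  have hprod : (n.properDivisors.toList.map fun d => e * s ^ n * e - e * s ^ d * e).prod = 0 := by
    apply Subtype.ext
    rw [← Subalgebra.coe_val, map_list_prod, List.map_map, map_zero]
    exact prod_elemE_elemS_sub_eq_zero a lam hn hnS
  have hfac : ∀ d ∈ n.properDivisors.toList,
      ρ (e * s ^ n * e - e * s ^ d * e) v = (μ * μ) • v := by
    intro d hd
    rw [Finset.mem_toList] at hd
    have hnd : ¬ n ∣ d := fun h =>
      (Nat.mem_properDivisors.1 hd).2.not_ge
        (Nat.le_of_dvd (Nat.pos_of_mem_properDivisors hd) h)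
    have h0 : ρ e v = μ • v := by simpa using hact 0
    simp only [map_sub, map_mul, map_pow, LinearMap.sub_apply, Module.End.mul_apply, h0, map_smul,
      hact, dvd_refl, hnd, if_true, if_false, zero_smul, smul_zero, sub_zero, smul_smul]
  have hlist : ∀ l : List ℕ, (∀ d ∈ l, ρ (e * s ^ n * e - e * s ^ d * e) v = (μ * μ) • v) →
      ρ (l.map fun d => e * s ^ n * e - e * s ^ d * e).prod v = (μ * μ) ^ l.length • v := by
    intro l
    induction l with
    | nil => intro _; simp
    | cons d l ih =>
      intro h
      rw [List.map_cons, List.prod_cons, map_mul, Module.End.mul_apply,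
        ih fun d hd => h d (List.mem_cons_of_mem _ hd), map_smul, h d List.mem_cons_self,
        smul_smul, List.length_cons, pow_succ]
  have h := hlist _ hfac
  rw [hprod, map_zero, LinearMap.zero_apply] at h
  exact smul_ne_zero (pow_ne_zero _ (mul_ne_zero hμ hμ)) hv h.symm
end
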